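/- Let H be a real Hilbert space and W : H → H a bounded, self-adjoint, nonnegative linear operator (⟨Wφ, φ⟩ ≥ 0 for all φ). For every ε > 0 the operator εI + W is boundedly invertible, and the following are equivalent: (i) W is positive, i.e. ⟨Wφ, φ⟩ > 0 for every φ ≠ 0; (ii) for every h ∈ H, ‖ε (εI + W)⁻¹ h‖ → 0 as ε → 0⁺ (i.e. ε (εI + W)⁻¹ converges to the zero operator in the strong operator topology). -/

import Mathlib

/-!
Since `⟪(ε + W) x, x⟫ ≥ ε ‖x‖²`, the operator `ε + W` is invertible and `T ε = ε (ε + W)⁻¹` is a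
contraction. If `W` is positive, it is injective, so its range is dense because `W` is self-adjoint.
On the range, `T ε (W g) = ε (g - T ε g)` has norm at most `2 ε ‖g‖`, and the uniform bound
`‖T ε‖ ≤ 1` extends the convergence `T ε h → 0` to all `h`. Conversely, if `⟪W φ, φ⟫ = 0`, then
`W φ = 0` by a Cauchy-Schwarz argument, so `T ε φ = φ` for all `ε > 0`, and the limit gives `φ = 0`.
-/

open ContinuousLinearMap InnerProductSpace Filter

section Resolvent

variable {H : Type*} [NormedAddCommGroup H] [InnerProductSpace ℝ H]

lemma coercive_smul_one_add (W : H →L[ℝ] H) (hW : ∀ φ : H, 0 ≤ ⟪W φ, φ⟫_ℝ) (ε : ℝ) (x : H) :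
    ε * ‖x‖ ^ 2 ≤ ⟪(ε • (1 : H →L[ℝ] H) + W) x, x⟫_ℝ := by
  have h1 : ⟪(ε • (1 : H →L[ℝ] H) + W) x, x⟫_ℝ = ε * ‖x‖ ^ 2 + ⟪W x, x⟫_ℝ := by
    simp [inner_add_left, real_inner_smul_left]
  linarith [hW x]

lemma mul_norm_le_norm_smul_one_add (W : H →L[ℝ] H) (hW : ∀ φ : H, 0 ≤ ⟪W φ, φ⟫_ℝ) (ε : ℝ)
    (x : H) : ε * ‖x‖ ≤ ‖(ε • (1 : H →L[ℝ] H) + W) x‖ := by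
  have h1 := coercive_smul_one_add W hW ε x
  have h2 := real_inner_le_norm ((ε • (1 : H →L[ℝ] H) + W) x) x
  rcases (norm_nonneg x).eq_or_lt with h0 | h0
  · rw [← h0, mul_zero]
    exact norm_nonneg _
  · refine le_of_mul_le_mul_right ?_ h0
    nlinarith

lemma isUnit_smul_one_add [CompleteSpace H] (W : H →L[ℝ] H) (hW : ∀ φ : H, 0 ≤ ⟪W φ, φ⟫_ℝ)
    (ε : ℝ) (hε : 0 < ε) : IsUnit (ε • (1 : H →L[ℝ] H) + W) := by
  refine isUnit_of_forall_le_norm_inner_map _ (c := ⟨ε, hε.le⟩) hε fun x => ?_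
  have h1 := (coercive_smul_one_add W hW ε x).trans (Real.le_norm_self _)
  rw [mul_comm] at h1
  exact h1

/-- A zero of the quadratic form of a nonnegative symmetric operator lies in its kernel. -/
lemma apply_eq_zero_of_inner_eq_zero [CompleteSpace H] (W : H →L[ℝ] H) (hWsa : IsSelfAdjoint W)
    (hW : ∀ φ : H, 0 ≤ ⟪W φ, φ⟫_ℝ) (φ : H) (h : ⟪W φ, φ⟫_ℝ = 0) : W φ = 0 := by
  have hb := hW (W φ)
  have hsym : ⟪W (W φ), φ⟫_ℝ = ‖W φ‖ ^ 2 := by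
    rw [← real_inner_self_eq_norm_sq]
    exact hWsa.isSymmetric (W φ) φ
  -- The form is nonnegative along the line `φ - t W φ`, where its linear term is `-2 t ‖W φ‖²`.
  have key : ∀ t : ℝ, 0 ≤ -2 * t * ‖W φ‖ ^ 2 + t ^ 2 * ⟪W (W φ), W φ⟫_ℝ := by
    intro t
    have h1 := hW (φ - t • W φ)
    simp only [map_sub, map_smul, inner_sub_left, inner_sub_right, real_inner_smul_left,
      real_inner_smul_right, real_inner_self_eq_norm_sq, h, hsym] at h1
    linarith
  set b := ⟪W (W φ), W φ⟫_ℝ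
  -- The minimizer is `t = ‖W φ‖² / b`; taking `b + 1` instead avoids dividing by zero.
  have h4 := key (‖W φ‖ ^ 2 / (b + 1))
  have h5 : -2 * (‖W φ‖ ^ 2 / (b + 1)) * ‖W φ‖ ^ 2 + (‖W φ‖ ^ 2 / (b + 1)) ^ 2 * b
      = - ((‖W φ‖ ^ 2 / (b + 1)) ^ 2 * (b + 2)) := by
    field_simp
    ring
  rw [h5] at h4
  have h6 : (‖W φ‖ ^ 2 / (b + 1)) ^ 2 = 0 := by
    nlinarith [sq_nonneg (‖W φ‖ ^ 2 / (b + 1))]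
  have h7 : b + 1 ≠ 0 := by positivity
  simpa [h7] using h6

end Resolvent

/-- Let `W` be a bounded, self-adjoint, nonnegative operator on a real
Hilbert space `H`. For every `ε > 0` the operator `εI + W` is boundedly invertible, and
`W` is positive (`⟨Wφ, φ⟩ > 0` for all `φ ≠ 0`) if and only if for every `h ∈ H` one has
`‖ε (εI + W)⁻¹ h‖ → 0` as `ε → 0⁺` (strong operator convergence to `0`). -/
theorem positive_iff_resolvent_tendsto_zero
    {H : Type*} [NormedAddCommGroup H] [InnerProductSpace ℝ H] [CompleteSpace H]
    (W : H →L[ℝ] H) (hWsa : IsSelfAdjoint W)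
    (hWnonneg : ∀ φ : H, 0 ≤ ⟪W φ, φ⟫_ℝ) :
    (∀ ε : ℝ, 0 < ε → IsUnit (ε • (1 : H →L[ℝ] H) + W))
      ∧ ((∀ φ : H, φ ≠ 0 → 0 < ⟪W φ, φ⟫_ℝ)
          ↔ ∀ h : H, Tendsto
              (fun ε : ℝ => ‖(ε • Ring.inverse (ε • (1 : H →L[ℝ] H) + W)) h‖)
              (nhdsWithin 0 (Set.Ioi 0)) (nhds 0)) := by
  have hU := isUnit_smul_one_add W hWnonneg
  refine ⟨hU, ?_⟩
  set T : ℝ → H →L[ℝ] H := fun ε => ε • Ring.inverse (ε • (1 : H →L[ℝ] H) + W) with hT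
  have hright : ∀ ε : ℝ, 0 < ε → ∀ x : H,
      (ε • (1 : H →L[ℝ] H) + W) (Ring.inverse (ε • (1 : H →L[ℝ] H) + W) x) = x :=
    fun ε hε x => congrArg (fun A : H →L[ℝ] H => A x) (Ring.mul_inverse_cancel _ (hU ε hε))
  have hleft : ∀ ε : ℝ, 0 < ε → ∀ x : H,
      Ring.inverse (ε • (1 : H →L[ℝ] H) + W) ((ε • (1 : H →L[ℝ] H) + W) x) = x :=
    fun ε hε x => congrArg (fun A : H →L[ℝ] H => A x) (Ring.inverse_mul_cancel _ (hU ε hε))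
  have hcontr : ∀ ε : ℝ, 0 < ε → ∀ x : H, ‖T ε x‖ ≤ ‖x‖ := by
    intro ε hε x
    have h1 := mul_norm_le_norm_smul_one_add W hWnonneg ε
      (Ring.inverse (ε • (1 : H →L[ℝ] H) + W) x)
    rw [hright ε hε x] at h1
    simpa [hT, norm_smul, abs_of_pos hε] using h1
  have hTW : ∀ ε : ℝ, 0 < ε → ∀ g : H, T ε (W g) = ε • (g - T ε g) := by
    intro ε hε g
    have h1 : W g = (ε • (1 : H →L[ℝ] H) + W) g - ε • g := by simp
    rw [h1, map_sub, map_smul, smul_sub]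
    congr 1
    simp only [hT, _root_.smul_apply]
    rw [hleft ε hε g]
  change _ ↔ ∀ h : H, Tendsto (fun ε : ℝ => ‖T ε h‖) _ _
  constructor
  · intro hpos h
    have hker : W.ker = ⊥ := by
      rw [Submodule.eq_bot_iff]
      intro x hx
      have hx' : W x = 0 := hx
      by_contra hne
      have h1 := hpos x hne
      rw [hx', inner_zero_left] at h1
      exact lt_irrefl _ h1
    have hdense : W.range.topologicalClosure = ⊤ := by
      rw [Submodule.topologicalClosure_eq_top_iff, W.orthogonal_range, hWsa.adjoint_eq, hker]
    have hmem : h ∈ closure (W.range : Set H) := by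
      rw [← Submodule.topologicalClosure_coe, hdense]
      trivial
    rw [Metric.tendsto_nhds]
    intro δ hδ
    obtain ⟨_, ⟨g, rfl⟩, hg⟩ := Metric.mem_closure_iff.mp hmem (δ / 2) (by positivity)
    have hg' : ‖h - W g‖ < δ / 2 := by
      rw [← dist_eq_norm]
      exact hg
    -- For `ε` below this threshold, `2 ε ‖g‖ < δ / 2`.
    have hη : 0 < δ / (4 * (‖g‖ + 1)) := by positivity
    filter_upwards [Ioo_mem_nhdsGT hη] with ε hε
    have hε2 : ε * (4 * (‖g‖ + 1)) < δ := (lt_div_iff₀ (by positivity)).mp hε.2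
    have hsplit : T ε h = T ε (h - W g) + ε • (g - T ε g) := by
      rw [← hTW ε hε.1 g, map_sub, sub_add_cancel]
    have h1 : ‖ε • (g - T ε g)‖ ≤ ε * (‖g‖ + ‖g‖) := by
      rw [norm_smul, Real.norm_eq_abs, abs_of_pos hε.1]
      exact mul_le_mul_of_nonneg_left
        ((norm_sub_le _ _).trans (by linarith [hcontr ε hε.1 g])) hε.1.le
    have h2 : ‖T ε h‖ ≤ ‖h - W g‖ + ε * (‖g‖ + ‖g‖) := by
      rw [hsplit]
      exact (norm_add_le _ _).trans (add_le_add (hcontr ε hε.1 _) h1)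
    rw [dist_zero_right, norm_norm]
    nlinarith [hε.1]
  · intro hlim φ hφ
    refine lt_of_le_of_ne (hWnonneg φ) fun h0 => hφ ?_
    have hWφ := apply_eq_zero_of_inner_eq_zero W hWsa hWnonneg φ h0.symm
    have hconst : (fun ε : ℝ => ‖T ε φ‖) =ᶠ[nhdsWithin 0 (Set.Ioi 0)] fun _ => ‖φ‖ := by
      filter_upwards [self_mem_nhdsWithin] with ε hε
      have h1 := hTW ε hε φ
      rw [hWφ, map_zero] at h1
      have h2 := (smul_eq_zero.mp h1.symm).resolve_left (ne_of_gt hε)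
      rw [← sub_eq_zero.mp h2]
    have h3 := tendsto_nhds_unique ((hlim φ).congr' hconst) tendsto_const_nhds
    exact norm_eq_zero.mp h3.symm
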